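/- There do not exist a (closed, infinite dimensional) subspace Y of X_p and positive constants ε and α with ε < 1 such that (a) r(Y) < ∞, and (b) for every x ∈ X_p with r(x) < α there exists y ∈ Y with ‖x − y‖ < ε·‖x‖. -/

import Mathlib

open scoped ENNReal

noncomputable section

/-- The sequence space `ℓ_p` (of real sequences), for a real exponent `p`. -/
abbrev SeqP (p : ℝ) := lp (fun _ : ℕ => ℝ) (ENNReal.ofReal p)

/-- The sequence space `ℓ_2` (of real sequences). -/
abbrev Seq2 := lp (fun _ : ℕ => ℝ) 2

/-- The space `X_{p,w}`, realized as the submodule of `ℓ_p ⊕_∞ ℓ_2` consisting of the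
pairs `(x, y)` with `y n = w n * x n`.  Since the norm on the product is the maximum of
the two norms, this is exactly the completion of the finitely supported sequences under
`‖a‖ = max {|a|_p, |a|_{2,w}}`, the element with coordinates `a` being identified with
the pair `(a, w·a)`. -/
def XpwMod (p : ℝ) (w : ℕ → ℝ) : Submodule ℝ (SeqP p × Seq2) where
  carrier := {z | ∀ n, (z.2 : ℕ → ℝ) n = w n * (z.1 : ℕ → ℝ) n}
  add_mem' := by
    intro a b ha hb n
    simp only [Prod.fst_add, Prod.snd_add, lp.coeFn_add, Pi.add_apply, ha n, hb n]
    ring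
  zero_mem' := by
    intro n
    simp
  smul_mem' := by
    intro c a ha n
    simp only [Prod.smul_fst, Prod.smul_snd, lp.coeFn_smul, Pi.smul_apply, ha n,
      smul_eq_mul]
    ring

/-- The space `X_{p,w}` with its natural norm `‖a‖ = max {|a|_p, |a|_{2,w}}`. -/
def Xpw (p : ℝ) (w : ℕ → ℝ) : Type := ↥(XpwMod p w)

variable {p : ℝ} {w : ℕ → ℝ}

instance [Fact (1 ≤ ENNReal.ofReal p)] : NormedAddCommGroup (Xpw p w) :=
  inferInstanceAs (NormedAddCommGroup ↥(XpwMod p w))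

instance [Fact (1 ≤ ENNReal.ofReal p)] : NormedSpace ℝ (Xpw p w) :=
  inferInstanceAs (NormedSpace ℝ ↥(XpwMod p w))

/-- The pair of coordinates (in `ℓ_p` and in weighted `ℓ_2`) of an element of `X_{p,w}`. -/
def Xpw.pair (x : Xpw p w) : SeqP p × Seq2 := (show ↥(XpwMod p w) from x).val

/-- The underlying sequence of coordinates of an element of `X_{p,w}`. -/
def seq (x : Xpw p w) : ℕ → ℝ := (Xpw.pair x).1

/-- `|x|_p` for `x ∈ X_{p,w}`. -/
def nrmP (x : Xpw p w) : ℝ := ‖(Xpw.pair x).1‖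

/-- `|x|_2 = |x|_{2,w}` for `x ∈ X_{p,w}`. -/
def nrm2 (x : Xpw p w) : ℝ := ‖(Xpw.pair x).2‖

/-- The ratio `r(x) = |x|_2 / |x|_p`. -/
def ratio (x : Xpw p w) : ℝ := nrm2 x / nrmP x

/-- `ω(E) = ∑_{n ∈ E} w_n^{2p/(p-2)}`. -/
def omegaE (p : ℝ) (w : ℕ → ℝ) (E : Set ℕ) : ℝ :=
  ∑' n : E, w (n : ℕ) ^ (2 * p / (p - 2))

/-- The pairing `⟨x, y⟩ = ∑_n x_n y_n w_n²`. -/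
def pairW (w : ℕ → ℝ) (x y : Xpw p w) : ℝ :=
  ∑' n, seq x n * seq y n * w n ^ 2

/-- `w` is a weight sequence suitable for Rosenthal's space `X_p`: it is positive and for
every `ε > 0`, `∑_{w_n < ε} w_n^{2p/(p-2)} = ∞`. -/
def IsXpWeight (p : ℝ) (w : ℕ → ℝ) : Prop :=
  (∀ n, 0 < w n) ∧
    ∀ ε : ℝ, 0 < ε →
      (∑' n : {n : ℕ | w n < ε}, ENNReal.ofReal (w (n : ℕ) ^ (2 * p / (p - 2)))) = ⊤

theorem memℓp_indicator {q : ℝ≥0∞} (E : Set ℕ) {f : ℕ → ℝ} (hf : Memℓp f q) :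
    Memℓp (E.indicator f) q := by
  rcases ENNReal.trichotomy q with hq | hq | hq
  · subst hq
    refine memℓp_zero ((memℓp_zero_iff.mp hf).subset ?_)
    intro i hi
    simp only [Set.mem_setOf_eq] at hi ⊢
    intro h
    exact hi (by simp [Set.indicator_apply, h])
  · subst hq
    obtain ⟨C, hC⟩ := (memℓp_infty_iff.mp hf)
    refine memℓp_infty ⟨C, ?_⟩
    rintro x ⟨i, rfl⟩
    exact le_trans (norm_indicator_le_norm_self f i) (hC ⟨i, rfl⟩)
  · refine memℓp_gen (Summable.of_nonneg_of_le (fun i => ?_) (fun i => ?_)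
      (hf.summable hq))
    · positivity
    · exact Real.rpow_le_rpow (norm_nonneg _) (norm_indicator_le_norm_self f i) hq.le

/-- The restriction `x ↦ x_{|E}` of elements of `X_{p,w}` to a set `E` of coordinates. -/
def restrict (E : Set ℕ) (x : Xpw p w) : Xpw p w :=
  show ↥(XpwMod p w) from
  ⟨(⟨E.indicator ((Xpw.pair x).1 : ℕ → ℝ), memℓp_indicator E (lp.memℓp (Xpw.pair x).1)⟩,
    ⟨E.indicator ((Xpw.pair x).2 : ℕ → ℝ), memℓp_indicator E (lp.memℓp (Xpw.pair x).2)⟩), by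
    intro n
    by_cases hn : n ∈ E
    · have h : ((Xpw.pair x).2 : ℕ → ℝ) n = w n * ((Xpw.pair x).1 : ℕ → ℝ) n :=
        (show ↥(XpwMod p w) from x).2 n
      simpa [Set.indicator_of_mem hn] using h
    · simp [Set.indicator_of_notMem hn]⟩

/-! For finite `E`, Hölder's inequality gives `|x_{|E}|_2 ≤ ω(E)^{1/2-1/p} |x_{|E}|_p`, with
equality for the block vector `g_E = ∑_{n ∈ E} w_n^{2/(p-2)} e_n`. Hence, when `ω(E) ≤ 1`, a vector
`y` with `‖g_E - y‖ ≤ ε ‖g_E‖` satisfies `|y_{|E}|_2 ≥ (1 - ε) √ω(E)`. Blocks `E_k` that escape to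
infinity with `ω(E_k)` small but bounded below therefore force a bounded sequence in `Y` whose
`|·|_2`-mass on `E_k` does not tend to zero.

If `r(Y) < ∞`, this is impossible, because bounded sequences of `Y` have `|·|_2`-convergent
subsequences. Otherwise there would be a bounded, coordinatewise null family in `Y` (differences of
the given sequence) with `|·|_2 ≥ c` frequently. Adding `N` well-chosen members with signs would
produce `u ∈ Y` with `|u|_p^p = O(N)` and `|u|_2^2 ≥ N c^2`, so that `r` would be unbounded on `Y`
as `p > 2`. -/

open Filter hiding seq
open Topology

section SequenceSpaces

variable {ι κ : Type*} {E : ι → Type*} [∀ i, NormedAddCommGroup (E i)] {q : ℝ≥0∞}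
  {l : Filter κ}

theorem toReal_pos_of_ne_top [Fact (1 ≤ q)] (hq : q ≠ ∞) : 0 < q.toReal :=
  ENNReal.toReal_pos (zero_lt_one.trans_le Fact.out).ne' hq

section Projection

variable [DecidableEq ι]

/-- The projection of `ℓ^q` onto the coordinates in a finite set `s`, as an additive map. It serves
to split a vector into a head and a tail. -/
def lpProj (s : Finset ι) : lp E q →+ lp E q where
  toFun x := ∑ i ∈ s, lp.single q i (x i)
  map_zero' := by simp
  map_add' x y := by simp [Finset.sum_add_distrib]

theorem lpProj_apply (s : Finset ι) (x : lp E q) :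
    lpProj s x = ∑ i ∈ s, lp.single q i (x i) := rfl

theorem lpProj_apply_apply (s : Finset ι) (x : lp E q) (i : ι) :
    lpProj s x i = if i ∈ s then x i else 0 := by
  simp only [lpProj_apply, lp.coeFn_sum, Finset.sum_apply, lp.single_apply, Finset.sum_pi_single]

theorem lpProj_sum_single (s : Finset ι) (f : ∀ i, E i) :
    lpProj s (∑ i ∈ s, lp.single q i (f i)) = ∑ i ∈ s, lp.single q i (f i) := by
  ext i
  simp only [lpProj_apply_apply, lp.coeFn_sum, Finset.sum_apply, lp.single_apply,
    Finset.sum_pi_single, ← ite_and, and_self]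

theorem norm_lpProj_rpow (hq : 0 < q.toReal) (s : Finset ι) (x : lp E q) :
    ‖lpProj s x‖ ^ q.toReal = ∑ i ∈ s, ‖x i‖ ^ q.toReal :=
  lp.norm_sum_single hq x s

theorem norm_rpow_eq_sum_add_norm_sub_lpProj_rpow (hq : 0 < q.toReal) (s : Finset ι)
    (x : lp E q) :
    ‖x‖ ^ q.toReal = ∑ i ∈ s, ‖x i‖ ^ q.toReal + ‖x - lpProj s x‖ ^ q.toReal := by
  rw [lpProj_apply, lp.norm_compl_sum_single hq, add_sub_cancel]

theorem norm_lpProj_le (hq : 0 < q.toReal) (s : Finset ι) (x : lp E q) : ‖lpProj s x‖ ≤ ‖x‖ := by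
  rw [← Real.rpow_le_rpow_iff (lp.norm_nonneg' _) (lp.norm_nonneg' _) hq,
    norm_lpProj_rpow hq]
  exact lp.sum_rpow_le_norm_rpow hq x s

theorem norm_sub_lpProj_le (hq : 0 < q.toReal) (s : Finset ι) (x : lp E q) :
    ‖x - lpProj s x‖ ≤ ‖x‖ := by
  rw [← Real.rpow_le_rpow_iff (lp.norm_nonneg' _) (lp.norm_nonneg' _) hq,
    norm_rpow_eq_sum_add_norm_sub_lpProj_rpow hq s x]
  exact le_add_of_nonneg_left (by positivity)

theorem tendsto_lpProj_nhds_zero_of_escape [Fact (1 ≤ q)] (hq : q ≠ ∞) {x : κ → lp E q}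
    {x₀ : lp E q} (hx : Tendsto x l (𝓝 x₀)) {s : κ → Finset ι} (hs : ∀ i, ∀ᶠ k in l, i ∉ s k) :
    Tendsto (fun k => lpProj (s k) (x k)) l (𝓝 0) := by
  have h_diff : Tendsto (fun k => lpProj (s k) (x k - x₀)) l (𝓝 0) :=
    squeeze_zero_norm (fun k => norm_lpProj_le (toReal_pos_of_ne_top hq) _ _)
      (tendsto_iff_norm_sub_tendsto_zero.mp hx)
  have h_limit : Tendsto (fun k => lpProj (s k) x₀) l (𝓝 0) := by
    rw [NormedAddGroup.tendsto_nhds_zero]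
    intro δ hδ
    obtain ⟨t, ht⟩ :=
      cauchySeq_finset_iff_vanishing_norm.mp (lp.hasSum_single hq x₀).cauchySeq δ hδ
    filter_upwards [(eventually_all_finset t).mpr fun i _ => hs i] with k hk
    exact ht (s k) (Finset.disjoint_right.mpr hk)
  simpa using h_diff.add h_limit

end Projection

variable [Fact (1 ≤ q)]

theorem eventually_norm_add_rpow_lt (hq : q ≠ ∞) (u : lp E q) {z : κ → lp E q} {M : ℝ}
    (hM : ∀ k, ‖z k‖ ≤ M) (hz : ∀ i, Tendsto (fun k => z k i) l (𝓝 0)) {δ : ℝ} (hδ : 0 < δ) :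
    ∀ᶠ k in l, ‖u + z k‖ ^ q.toReal < ‖u‖ ^ q.toReal + M ^ q.toReal + δ := by
  have hr := toReal_pos_of_ne_top hq
  classical
  have h_tail : Tendsto (fun s : Finset ι => (‖u - lpProj s u‖ + M) ^ q.toReal) atTop
      (𝓝 (M ^ q.toReal)) := by
    have := ((tendsto_const_nhds (x := u)).sub (lp.hasSum_single hq u)).norm.add_const M
    simpa [lpProj_apply] using this.rpow_const (Or.inr hr.le)
  obtain ⟨s, hs⟩ :=
    (h_tail.eventually_lt_const (lt_add_of_pos_right _ (half_pos hδ))).exists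
  have h_head : Tendsto (fun k => ∑ i ∈ s, ‖(u + z k) i‖ ^ q.toReal) l
      (𝓝 (∑ i ∈ s, ‖u i‖ ^ q.toReal)) := by
    refine tendsto_finsetSum s fun i _ => ?_
    simpa using ((hz i).const_add (u i)).norm.rpow_const (Or.inr hr.le)
  have h_head_lt : ∑ i ∈ s, ‖u i‖ ^ q.toReal < ‖u‖ ^ q.toReal + δ / 2 :=
    (lp.sum_rpow_le_norm_rpow hr u s).trans_lt (lt_add_of_pos_right _ (half_pos hδ))
  filter_upwards [h_head.eventually_lt_const h_head_lt] with k hk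
  have h_tail_le : ‖(u + z k) - lpProj s (u + z k)‖ ≤ ‖u - lpProj s u‖ + M := by
    rw [map_add, add_sub_add_comm]
    exact (norm_add_le _ _).trans (by gcongr; exact (norm_sub_lpProj_le hr s _).trans (hM k))
  have h_tail_rpow := Real.rpow_le_rpow (norm_nonneg _) h_tail_le hr.le
  rw [norm_rpow_eq_sum_add_norm_sub_lpProj_rpow hr s]
  linarith

theorem exists_subseq_tendsto_coordinatewise [Countable ι] [∀ i, ProperSpace (E i)] {x : ℕ → lp E q}
    {M : ℝ} (hM : ∀ k, ‖x k‖ ≤ M) :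
    ∃ (x₀ : ∀ i, E i) (φ : ℕ → ℕ), StrictMono φ ∧
      ∀ i, Tendsto (fun k => x (φ k) i) atTop (𝓝 (x₀ i)) := by
  have hcompact : IsCompact (Set.univ.pi fun i => Metric.closedBall (0 : E i) M) :=
    isCompact_univ_pi fun i => isCompact_closedBall _ _
  obtain ⟨x₀, -, φ, hφ, hx₀⟩ := hcompact.tendsto_subseq (x := fun k => ⇑(x k)) fun k i _ =>
    mem_closedBall_zero_iff.mpr <|
      (lp.norm_apply_le_norm (zero_lt_one.trans_le Fact.out).ne' (x k) i).trans (hM k)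
  exact ⟨x₀, φ, hφ, tendsto_pi_nhds.mp hx₀⟩

end SequenceSpaces

section RealInequalities

theorem sum_mul_sq_le_rpow_mul_rpow {ι : Type*} (s : Finset ι) {v a : ι → ℝ} (hp : 2 < p)
    (hv : ∀ i, 0 ≤ v i) :
    ∑ i ∈ s, (v i * a i) ^ 2 ≤
      (∑ i ∈ s, v i ^ (2 * p / (p - 2))) ^ (1 - 2 / p) * (∑ i ∈ s, |a i| ^ p) ^ (2 / p) := by
  have hp2 : p - 2 ≠ 0 := by linarith
  have hconj : (p / (p - 2)).HolderConjugate (p / 2) :=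
    Real.holderConjugate_iff.mpr
      ⟨(one_lt_div (by linarith)).mpr (by linarith), by field_simp; ring⟩
  have hv_pow (i : ι) : (v i ^ 2) ^ (p / (p - 2)) = v i ^ (2 * p / (p - 2)) := by
    rw [← Real.rpow_natCast_mul (hv i)]; congr 1; push_cast; ring
  have ha_pow (i : ι) : (a i ^ 2) ^ (p / 2) = |a i| ^ p := by
    rw [← sq_abs, ← Real.rpow_natCast_mul (abs_nonneg _)]; congr 1; push_cast; ring
  have holder := Real.inner_le_Lp_mul_Lq_of_nonneg s hconj
    (f := fun i => v i ^ 2) (g := fun i => a i ^ 2) (fun i _ => sq_nonneg _)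
    (fun i _ => sq_nonneg _)
  have hexp : 1 / (p / (p - 2)) = 1 - 2 / p := by
    have : p ≠ 0 := by linarith
    field_simp
  simpa only [← mul_pow, hv_pow, ha_pow, one_div_div, hexp] using holder

theorem exists_sum_range_mem_Icc {f : ℕ → ℝ} (hf₀ : ∀ n, 0 ≤ f n) (hf : ¬ Summable f)
    {b c : ℝ} (hb : 0 < b) (hc : ∀ n, f n ≤ c) :
    ∃ m, ∑ i ∈ Finset.range m, f i ∈ Set.Icc b (b + c) := by
  classical
  have hex : ∃ m, b ≤ ∑ i ∈ Finset.range m, f i :=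
    (((not_summable_iff_tendsto_nat_atTop_of_nonneg hf₀).mp hf).eventually_ge_atTop b).exists
  refine ⟨Nat.find hex, Nat.find_spec hex, ?_⟩
  obtain ⟨m, hm⟩ : ∃ m, Nat.find hex = m + 1 := Nat.exists_eq_succ_of_ne_zero fun h0 => by
    have := Nat.find_spec hex
    rw [h0, Finset.sum_range_zero] at this
    exact this.not_gt hb
  have hlt : ∑ i ∈ Finset.range m, f i < b := not_le.mp (Nat.find_min hex (by omega))
  rw [hm, Finset.sum_range_succ]
  exact add_le_add hlt.le (hc m)

theorem exists_nat_mul_rpow_lt {r a : ℝ} (hr : r < 1) (A : ℝ) (ha : 0 < a) :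
    ∃ N : ℕ, A * (N : ℝ) ^ r < a * N := by
  have hlim : Tendsto (fun N : ℕ => (N : ℝ) ^ (1 - r)) atTop atTop :=
    (tendsto_rpow_atTop (sub_pos.mpr hr)).comp tendsto_natCast_atTop_atTop
  obtain ⟨N, hN, hN_pos⟩ :=
    ((hlim.eventually_gt_atTop (A / a)).and (eventually_gt_atTop 0)).exists
  have hN₀ : (0 : ℝ) < N := Nat.cast_pos.mpr hN_pos
  refine ⟨N, ?_⟩
  calc A * (N : ℝ) ^ r < (N : ℝ) ^ (1 - r) * a * (N : ℝ) ^ r := by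
        gcongr
        exact (div_lt_iff₀ ha).mp hN
    _ = a * ((N : ℝ) ^ (1 - r) * (N : ℝ) ^ r) := by ring
    _ = a * N := by rw [← Real.rpow_add hN₀, sub_add_cancel, Real.rpow_one]

theorem add_norm_sq_le_norm_add_sq_or_norm_sub_sq {H : Type*} [NormedAddCommGroup H]
    [InnerProductSpace ℝ H] (x y : H) :
    ‖x‖ ^ 2 + ‖y‖ ^ 2 ≤ ‖x + y‖ ^ 2 ∨ ‖x‖ ^ 2 + ‖y‖ ^ 2 ≤ ‖x - y‖ ^ 2 := by
  by_contra! h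
  linarith [parallelogram_law_with_norm ℝ x y]

end RealInequalities

section RosenthalSpace

theorem pair_snd_apply (x : Xpw p w) (n : ℕ) : (Xpw.pair x).2 n = w n * seq x n :=
  (show ↥(XpwMod p w) from x).2 n

theorem pair_restrict_fst (E : Finset ℕ) (x : Xpw p w) :
    (Xpw.pair (restrict E x)).1 = lpProj E (Xpw.pair x).1 := by
  ext n
  rw [lpProj_apply_apply]
  exact Set.indicator_apply (E : Set ℕ) _ n

theorem pair_restrict_snd (E : Finset ℕ) (x : Xpw p w) :
    (Xpw.pair (restrict E x)).2 = lpProj E (Xpw.pair x).2 := by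
  ext n
  rw [lpProj_apply_apply]
  exact Set.indicator_apply (E : Set ℕ) _ n

theorem omegaE_coe (p : ℝ) (w : ℕ → ℝ) (E : Finset ℕ) :
    omegaE p w E = ∑ n ∈ E, w n ^ (2 * p / (p - 2)) :=
  Finset.tsum_subtype' E fun n => w n ^ (2 * p / (p - 2))

theorem omegaE_coe_nonneg (hw : ∀ n, 0 ≤ w n) (E : Finset ℕ) : 0 ≤ omegaE p w E := by
  rw [omegaE_coe]
  exact Finset.sum_nonneg fun n _ => Real.rpow_nonneg (hw n) _

theorem IsXpWeight.not_summable_indicator (hw : IsXpWeight p w) {η : ℝ} (hη : 0 < η) :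
    ¬ Summable ({n | w n < η}.indicator fun n => w n ^ (2 * p / (p - 2))) := fun h =>
  (summable_subtype_iff_indicator.mpr h).tsum_ofReal_ne_top (hw.2 η hη)

theorem IsXpWeight.exists_finset_omegaE_mem_Icc (hp : 2 < p) (hw : IsXpWeight p w) {b : ℝ}
    (hb : 0 < b) (N : ℕ) :
    ∃ E : Finset ℕ, (∀ n ∈ E, N ≤ n) ∧ omegaE p w E ∈ Set.Icc b (2 * b) := by
  set s : ℝ := 2 * p / (p - 2)
  have hs : 0 < s := div_pos (by linarith) (by linarith)
  set η : ℝ := b ^ s⁻¹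
  set f : ℕ → ℝ := {n | w n < η}.indicator fun n => w n ^ s
  have hf_nonneg (n : ℕ) : 0 ≤ f n :=
    Set.indicator_nonneg (fun n _ => Real.rpow_nonneg (hw.1 n).le _) n
  have hf_le (n : ℕ) : f n ≤ b :=
    Set.indicator_le' (fun n hn => ((Real.lt_rpow_inv_iff_of_pos (hw.1 n).le hb.le hs).mp hn).le)
      (fun _ _ => hb.le) n
  have hf_tail : ¬ Summable fun n => f (N + n) := by
    simp_rw [add_comm N, summable_nat_add_iff]
    exact hw.not_summable_indicator (Real.rpow_pos_of_pos hb _)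
  obtain ⟨m, hm⟩ := exists_sum_range_mem_Icc (fun n => hf_nonneg (N + n)) hf_tail hb
    fun n => hf_le (N + n)
  refine ⟨{n ∈ Finset.Ico N (N + m) | w n < η}, fun n hn => ?_, ?_⟩
  · exact (Finset.mem_Ico.mp (Finset.mem_filter.mp hn).1).1
  · rw [omegaE_coe, Finset.sum_filter, Finset.sum_Ico_eq_sum_range, add_tsub_cancel_left, two_mul]
    simpa only [f, Set.indicator_apply, Set.mem_ofPred_eq] using hm

theorem nrm2_nonneg (x : Xpw p w) : 0 ≤ nrm2 x := norm_nonneg (Xpw.pair x).2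

theorem nrm2_restrict_sq (E : Finset ℕ) (x : Xpw p w) :
    nrm2 (restrict E x) ^ 2 = ∑ n ∈ E, (w n * seq x n) ^ 2 := by
  have h := norm_lpProj_rpow (by norm_num) E (Xpw.pair x).2
  rw [← pair_restrict_snd] at h
  simp only [ENNReal.toReal_ofNat, Real.rpow_ofNat, pair_snd_apply, Real.norm_eq_abs, sq_abs] at h
  exact h

variable [Fact (1 ≤ ENNReal.ofReal p)]

variable (p) in
theorem one_le_exponent : 1 ≤ p :=
  ENNReal.one_le_ofReal.mp Fact.out

variable (p) in
theorem toReal_exponent : (ENNReal.ofReal p).toReal = p :=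
  ENNReal.toReal_ofReal (zero_le_one.trans (one_le_exponent p))

variable (p) in
theorem exponent_toReal_pos : 0 < (ENNReal.ofReal p).toReal :=
  toReal_pos_of_ne_top ENNReal.ofReal_ne_top

theorem norm_eq_max_nrmP_nrm2 (x : Xpw p w) : ‖x‖ = max (nrmP x) (nrm2 x) := rfl

theorem nrmP_le_norm (x : Xpw p w) : nrmP x ≤ ‖x‖ := le_max_left _ _

theorem nrmP_nonneg (x : Xpw p w) : 0 ≤ nrmP x := norm_nonneg (Xpw.pair x).1

theorem nrmP_pos {x : Xpw p w} (hx : x ≠ 0) : 0 < nrmP x := by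
  refine (nrmP_nonneg x).lt_of_ne' fun h => hx (norm_eq_zero.mp ?_)
  have hfst : (Xpw.pair x).1 = 0 := norm_eq_zero.mp h
  have hsnd : (Xpw.pair x).2 = 0 := by
    ext n
    simp [pair_snd_apply, seq, hfst]
  simp [norm_eq_max_nrmP_nrm2, nrmP, nrm2, hfst, hsnd]

theorem nrm2_le_mul_nrmP_of_ratio_le {x : Xpw p w} {C : ℝ} (h : x ≠ 0 → ratio x ≤ C) :
    nrm2 x ≤ C * nrmP x := by
  rcases eq_or_ne x 0 with rfl | hx
  · exact (norm_zero.trans (mul_eq_zero_of_right C norm_zero).symm).le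
  · exact (div_le_iff₀ (nrmP_pos hx)).mp (h hx)

theorem nrmP_restrict_le (E : Finset ℕ) (x : Xpw p w) : nrmP (restrict E x) ≤ nrmP x := by
  rw [nrmP, pair_restrict_fst]
  exact norm_lpProj_le (exponent_toReal_pos p) E _

theorem nrmP_restrict_rpow (E : Finset ℕ) (x : Xpw p w) :
    nrmP (restrict E x) ^ p = ∑ n ∈ E, |seq x n| ^ p := by
  have h := norm_lpProj_rpow (exponent_toReal_pos p) E (Xpw.pair x).1
  rwa [toReal_exponent, ← pair_restrict_fst] at h

theorem nrm2_restrict_le (hp : 2 < p) (hw : ∀ n, 0 ≤ w n) (E : Finset ℕ) (x : Xpw p w) :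
    nrm2 (restrict E x) ≤ omegaE p w E ^ (1 / 2 - 1 / p) * nrmP (restrict E x) := by
  have hω := omegaE_coe_nonneg (p := p) hw E
  refine le_of_sq_le_sq ?_ (mul_nonneg (Real.rpow_nonneg hω _) (nrmP_nonneg _))
  calc nrm2 (restrict E x) ^ 2
      ≤ omegaE p w E ^ (1 - 2 / p) * (nrmP (restrict E x) ^ p) ^ (2 / p) := by
        rw [nrm2_restrict_sq, nrmP_restrict_rpow, omegaE_coe]
        exact sum_mul_sq_le_rpow_mul_rpow E hp hw
    _ = (omegaE p w E ^ (1 / 2 - 1 / p) * nrmP (restrict E x)) ^ 2 := by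
        rw [mul_pow, ← Real.rpow_mul_natCast hω, ← Real.rpow_mul (nrmP_nonneg _),
          mul_div_cancel₀ _ (by linarith), Real.rpow_ofNat]
        congr 2
        push_cast
        ring

end RosenthalSpace

section BlockVector

/-- The vector `∑_{n ∈ E} w_n^{2/(p-2)} e_n`, for which Hölder's inequality between `|·|_2` and
`|·|_p` on `E` is an equality. It serves as the test vector of small ratio carried by `E`. -/
def blockVector (p : ℝ) (w : ℕ → ℝ) (E : Finset ℕ) : Xpw p w :=
  show ↥(XpwMod p w) from
  ⟨(∑ n ∈ E, lp.single _ n (w n ^ (2 / (p - 2))),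
    ∑ n ∈ E, lp.single _ n (w n * w n ^ (2 / (p - 2)))), fun n => by
    rw [lp.coeFn_sum, lp.coeFn_sum]
    simp only [Finset.sum_apply, lp.single_apply, Finset.sum_pi_single, mul_ite, mul_zero]⟩

theorem restrict_blockVector (E : Finset ℕ) :
    restrict E (blockVector p w E) = blockVector p w E :=
  Subtype.ext <| Prod.ext
    ((pair_restrict_fst E _).trans (lpProj_sum_single E _))
    ((pair_restrict_snd E _).trans (lpProj_sum_single E _))

theorem nrm2_blockVector (hp : 2 < p) (hw : ∀ n, 0 < w n) (E : Finset ℕ) :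
    nrm2 (blockVector p w E) = √(omegaE p w E) := by
  have hweight (n : ℕ) : ‖w n * w n ^ (2 / (p - 2))‖ ^ 2 = w n ^ (2 * p / (p - 2)) := by
    have hp2 : p - 2 ≠ 0 := by linarith
    rw [Real.norm_eq_abs, sq_abs, mul_comm, ← Real.rpow_add_one (hw n).ne',
      ← Real.rpow_mul_natCast (hw n).le]
    congr 1
    push_cast
    field_simp
    ring
  have hsq : nrm2 (blockVector p w E) ^ 2 = omegaE p w E := by
    have h := lp.norm_sum_single (p := 2) (by norm_num)
      (fun n => w n * w n ^ (2 / (p - 2))) E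
    simp only [ENNReal.toReal_ofNat, Real.rpow_ofNat, hweight, ← omegaE_coe] at h
    exact h
  rw [← hsq, Real.sqrt_sq (nrm2_nonneg _)]

variable [Fact (1 ≤ ENNReal.ofReal p)]

theorem nrmP_blockVector (hp : 2 < p) (hw : ∀ n, 0 < w n) (E : Finset ℕ) :
    nrmP (blockVector p w E) = omegaE p w E ^ (1 / p) := by
  have hweight (n : ℕ) : ‖w n ^ (2 / (p - 2))‖ ^ p = w n ^ (2 * p / (p - 2)) := by
    rw [Real.norm_of_nonneg (Real.rpow_nonneg (hw n).le _), ← Real.rpow_mul (hw n).le,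
      div_mul_eq_mul_div]
  have hpow : nrmP (blockVector p w E) ^ p = omegaE p w E := by
    have h := lp.norm_sum_single (exponent_toReal_pos p) (fun n => w n ^ (2 / (p - 2))) E
    simp only [toReal_exponent, hweight, ← omegaE_coe] at h
    exact h
  rw [← hpow, one_div, Real.rpow_rpow_inv (nrmP_nonneg _) (by linarith)]

theorem nrm2_blockVector_eq_rpow_mul_nrmP (hp : 2 < p) (hw : ∀ n, 0 < w n) {E : Finset ℕ}
    (hE : 0 < omegaE p w E) :
    nrm2 (blockVector p w E) = omegaE p w E ^ (1 / 2 - 1 / p) * nrmP (blockVector p w E) := by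
  rw [nrm2_blockVector hp hw, nrmP_blockVector hp hw, ← Real.rpow_add hE, sub_add_cancel,
    Real.sqrt_eq_rpow]

theorem nrmP_blockVector_pos (hp : 2 < p) (hw : ∀ n, 0 < w n) {E : Finset ℕ}
    (hE : 0 < omegaE p w E) : 0 < nrmP (blockVector p w E) := by
  rw [nrmP_blockVector hp hw]
  exact Real.rpow_pos_of_pos hE _

theorem ratio_blockVector (hp : 2 < p) (hw : ∀ n, 0 < w n) {E : Finset ℕ}
    (hE : 0 < omegaE p w E) :
    ratio (blockVector p w E) = omegaE p w E ^ (1 / 2 - 1 / p) :=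
  (div_eq_iff (nrmP_blockVector_pos hp hw hE).ne').mpr
    (nrm2_blockVector_eq_rpow_mul_nrmP hp hw hE)

theorem norm_blockVector (hp : 2 < p) (hw : ∀ n, 0 < w n) {E : Finset ℕ}
    (hE : 0 < omegaE p w E) (hE1 : omegaE p w E ≤ 1) :
    ‖blockVector p w E‖ = nrmP (blockVector p w E) := by
  have hexp : 1 / p ≤ 1 / 2 := one_div_le_one_div_of_le two_pos hp.le
  refine max_eq_left ?_
  calc nrm2 (blockVector p w E)
      = omegaE p w E ^ (1 / 2 - 1 / p) * nrmP (blockVector p w E) :=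
        nrm2_blockVector_eq_rpow_mul_nrmP hp hw hE
    _ ≤ nrmP (blockVector p w E) :=
        mul_le_of_le_one_left (nrmP_nonneg _)
          (Real.rpow_le_one hE.le hE1 (sub_nonneg.mpr hexp))

theorem le_nrm2_restrict_of_norm_blockVector_sub_le (hp : 2 < p) (hw : ∀ n, 0 < w n)
    {E : Finset ℕ} (hE : 0 < omegaE p w E) (hE1 : omegaE p w E ≤ 1) {y : Xpw p w} {ε : ℝ}
    (hy : ‖blockVector p w E - y‖ ≤ ε * ‖blockVector p w E‖) :
    (1 - ε) * √(omegaE p w E) ≤ nrm2 (restrict E y) := by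
  set g := blockVector p w E
  have herror : nrm2 (restrict E (g - y)) ≤ ε * nrm2 g := by
    calc nrm2 (restrict E (g - y))
        ≤ omegaE p w E ^ (1 / 2 - 1 / p) * nrmP (restrict E (g - y)) :=
          nrm2_restrict_le hp (fun n => (hw n).le) E _
      _ ≤ omegaE p w E ^ (1 / 2 - 1 / p) * (ε * nrmP g) := by
          gcongr
          rw [← norm_blockVector hp hw hE hE1]
          exact (nrmP_restrict_le E _).trans ((nrmP_le_norm _).trans hy)
      _ = ε * nrm2 g := by
          rw [nrm2_blockVector_eq_rpow_mul_nrmP hp hw hE]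
          ring
  have htriangle : nrm2 g ≤ nrm2 (restrict E y) + nrm2 (restrict E (g - y)) := by
    have hsplit : (Xpw.pair g).2 =
        (Xpw.pair (restrict E y)).2 + (Xpw.pair (restrict E (g - y))).2 := by
      have hsub : (Xpw.pair (g - y)).2 = (Xpw.pair g).2 - (Xpw.pair y).2 := rfl
      rw [pair_restrict_snd, pair_restrict_snd, hsub, map_sub, add_sub_cancel,
        ← pair_restrict_snd, restrict_blockVector]
    rw [nrm2, hsplit]
    exact norm_add_le _ _
  rw [← nrm2_blockVector hp hw]
  linarith

theorem IsXpWeight.exists_seq_ratio_blockVector_lt (hp : 2 < p) (hw : IsXpWeight p w) {α : ℝ}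
    (hα : 0 < α) :
    ∃ b > 0, ∃ E : ℕ → Finset ℕ, ∀ k, (∀ n ∈ E k, k ≤ n) ∧ omegaE p w (E k) ∈ Set.Icc b 1 ∧
      ratio (blockVector p w (E k)) < α := by
  have hexp : 0 < 1 / 2 - 1 / p := sub_pos.mpr (one_div_lt_one_div_of_lt two_pos hp)
  have hsmall : ∀ᶠ b : ℝ in 𝓝 0, (2 * b) ^ (1 / 2 - 1 / p) < α ∧ 2 * b < 1 := by
    have hcont : ContinuousAt (fun b : ℝ => (2 * b) ^ (1 / 2 - 1 / p)) 0 :=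
      (continuous_const_mul (2 : ℝ)).continuousAt.rpow_const (Or.inr hexp.le)
    refine (hcont.eventually_lt_const ?_).and
      ((continuous_const_mul (2 : ℝ)).continuousAt.eventually_lt_const (by norm_num))
    simpa only [mul_zero, Real.zero_rpow hexp.ne'] using hα
  obtain ⟨b, ⟨hbα, hb1⟩, hb : 0 < b⟩ := ((hsmall.filter_mono nhdsWithin_le_nhds).and
    (self_mem_nhdsWithin (s := Set.Ioi 0))).exists
  choose E hEk hEω using hw.exists_finset_omegaE_mem_Icc hp hb
  refine ⟨b, hb, E, fun k => ⟨hEk k, ⟨(hEω k).1, (hEω k).2.trans hb1.le⟩, ?_⟩⟩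
  have hω : 0 < omegaE p w (E k) := hb.trans_le (hEω k).1
  rw [ratio_blockVector hp hw.1 hω]
  exact (Real.rpow_le_rpow hω.le (hEω k).2 hexp.le).trans_lt hbα

theorem exists_seq_le_nrm2_restrict (hp : 2 < p) (hw : IsXpWeight p w) {Y : Set (Xpw p w)}
    {ε α : ℝ} (hε : ε < 1) (hα : 0 < α)
    (hY : ∀ x : Xpw p w, x ≠ 0 → ratio x < α → ∃ y ∈ Y, ‖x - y‖ < ε * ‖x‖) :
    ∃ c > 0, ∃ (E : ℕ → Finset ℕ) (y : ℕ → Xpw p w), (∀ k, ∀ n ∈ E k, k ≤ n) ∧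
      (∀ k, y k ∈ Y ∧ ‖y k‖ ≤ 2) ∧ ∀ k, c ≤ nrm2 (restrict (E k) (y k)) := by
  obtain ⟨b, hb, E, hE⟩ := hw.exists_seq_ratio_blockVector_lt hp hα
  choose hEk hEω hE_ratio using hE
  have hω (k : ℕ) : 0 < omegaE p w (E k) := hb.trans_le (hEω k).1
  have hE_norm (k : ℕ) := norm_blockVector hp hw.1 (hω k) (hEω k).2
  have hE_ne (k : ℕ) : blockVector p w (E k) ≠ 0 := by
    rw [← norm_pos_iff, hE_norm k]
    exact nrmP_blockVector_pos hp hw.1 (hω k)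
  choose y hyY hy using fun k => hY _ (hE_ne k) (hE_ratio k)
  refine ⟨(1 - ε) * √b, mul_pos (sub_pos.mpr hε) (Real.sqrt_pos.mpr hb), E, y, hEk,
    fun k => ⟨hyY k, ?_⟩, fun k => ?_⟩
  · have hE_norm_le : ‖blockVector p w (E k)‖ ≤ 1 := by
      rw [hE_norm k, nrmP_blockVector hp hw.1]
      exact Real.rpow_le_one (hω k).le (hEω k).2 (by positivity)
    have htriangle := norm_le_norm_add_norm_sub (blockVector p w (E k)) (y k)
    nlinarith [hy k, norm_nonneg (blockVector p w (E k))]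
  · calc (1 - ε) * √b
        ≤ (1 - ε) * √(omegaE p w (E k)) :=
          mul_le_mul_of_nonneg_left (Real.sqrt_le_sqrt (hEω k).1) (sub_pos.mpr hε).le
      _ ≤ nrm2 (restrict (E k) (y k)) :=
          le_nrm2_restrict_of_norm_blockVector_sub_le hp hw.1 (hω k) (hEω k).2 (hy k).le

end BlockVector

section BoundedRatio

variable [Fact (1 ≤ ENNReal.ofReal p)] {κ : Type*} {l : Filter κ} {Y : AddSubgroup (Xpw p w)}
  {d : κ → Xpw p w} {M C : ℝ}

theorem exists_mem_nrmP_rpow_le_and_le_nrm2_sq (hdY : ∀ k, d k ∈ Y) (hdM : ∀ k, nrmP (d k) ≤ M)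
    (hd₀ : ∀ n, Tendsto (fun k => seq (d k) n) l (𝓝 0)) {c : ℝ} (hc : 0 ≤ c)
    (hdc : ∃ᶠ k in l, c ≤ nrm2 (d k)) (N : ℕ) :
    ∃ u ∈ Y, nrmP u ^ p ≤ N * (M ^ p + 1) ∧ N * c ^ 2 ≤ nrm2 u ^ 2 := by
  induction N with
  | zero =>
    have hzero : nrmP (0 : Xpw p w) = 0 := norm_zero
    refine ⟨0, Y.zero_mem, ?_, ?_⟩
    · simp [hzero, Real.zero_rpow (zero_lt_one.trans_le (one_le_exponent p)).ne']
    · simpa using sq_nonneg (nrm2 (0 : Xpw p w))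
  | succ N ih =>
    obtain ⟨u, huY, huP, hu2⟩ := ih
    have hadd : ∀ᶠ k in l, nrmP (u + d k) ^ p < nrmP u ^ p + M ^ p + 1 := by
      have h := eventually_norm_add_rpow_lt ENNReal.ofReal_ne_top (Xpw.pair u).1
        (z := fun k => (Xpw.pair (d k)).1) hdM hd₀ one_pos
      rwa [toReal_exponent] at h
    have hsub : ∀ᶠ k in l, nrmP (u - d k) ^ p < nrmP u ^ p + M ^ p + 1 := by
      have h := eventually_norm_add_rpow_lt ENNReal.ofReal_ne_top (Xpw.pair u).1
        (z := fun k => -(Xpw.pair (d k)).1) (fun k => (norm_neg _).trans_le (hdM k))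
        (fun n => by simpa using! (hd₀ n).neg) one_pos
      simp only [toReal_exponent, ← sub_eq_add_neg] at h
      exact h
    obtain ⟨k, hk, hadd_k, hsub_k⟩ := (hdc.and_eventually (hadd.and hsub)).exists
    have hk_sq : c ^ 2 ≤ nrm2 (d k) ^ 2 := pow_le_pow_left₀ hc hk 2
    push_cast
    rcases add_norm_sq_le_norm_add_sq_or_norm_sub_sq (Xpw.pair u).2 (Xpw.pair (d k)).2 with h | h
    · have hgrow : nrm2 u ^ 2 + nrm2 (d k) ^ 2 ≤ nrm2 (u + d k) ^ 2 := h
      exact ⟨u + d k, Y.add_mem huY (hdY k), by linarith, by linarith⟩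
    · have hgrow : nrm2 u ^ 2 + nrm2 (d k) ^ 2 ≤ nrm2 (u - d k) ^ 2 := h
      exact ⟨u - d k, Y.sub_mem huY (hdY k), by linarith, by linarith⟩

theorem tendsto_nrm2_nhds_zero_of_coordinatewise (hp : 2 < p) (hC : ∀ y ∈ Y, nrm2 y ≤ C * nrmP y)
    (hdY : ∀ k, d k ∈ Y) (hdM : ∀ k, nrmP (d k) ≤ M)
    (hd₀ : ∀ n, Tendsto (fun k => seq (d k) n) l (𝓝 0)) :
    Tendsto (fun k => nrm2 (d k)) l (𝓝 0) := by
  have hp₀ : 0 < p := by linarith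
  by_contra hnot
  obtain ⟨c, hc, hfreq⟩ : ∃ c > 0, ∃ᶠ k in l, c ≤ nrm2 (d k) := by
    rw [Metric.tendsto_nhds] at hnot
    push Not at hnot
    simpa [abs_of_nonneg (nrm2_nonneg _)] using hnot
  obtain ⟨k, -⟩ := hfreq.exists
  have hM : 0 ≤ M := (nrmP_nonneg (d k)).trans (hdM k)
  set K := M ^ p + 1
  have hK : 0 ≤ K := by positivity
  obtain ⟨N, hN⟩ := exists_nat_mul_rpow_lt (div_lt_one hp₀ |>.mpr hp) (C ^ 2 * K ^ (2 / p))
    (pow_pos hc 2)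
  obtain ⟨u, huY, huP, hu2⟩ :=
    exists_mem_nrmP_rpow_le_and_le_nrm2_sq hdY hdM hd₀ hc.le hfreq N
  refine hN.not_ge ?_
  calc c ^ 2 * N ≤ nrm2 u ^ 2 := by rwa [mul_comm]
    _ ≤ (C * nrmP u) ^ 2 := pow_le_pow_left₀ (nrm2_nonneg u) (hC u huY) 2
    _ = C ^ 2 * (nrmP u ^ p) ^ (2 / p) := by
        rw [mul_pow, ← Real.rpow_mul (nrmP_nonneg u), mul_div_cancel₀ _ hp₀.ne', Real.rpow_ofNat]
    _ ≤ C ^ 2 * (N * K) ^ (2 / p) := by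
        have := nrmP_nonneg u
        gcongr
    _ = C ^ 2 * K ^ (2 / p) * (N : ℝ) ^ (2 / p) := by
        rw [Real.mul_rpow N.cast_nonneg hK]
        ring

theorem exists_subseq_tendsto_pair_snd (hp : 2 < p) (hC : ∀ y ∈ Y, nrm2 y ≤ C * nrmP y)
    {y : ℕ → Xpw p w} (hyY : ∀ k, y k ∈ Y) (hyM : ∀ k, nrmP (y k) ≤ M) :
    ∃ (v : Seq2) (φ : ℕ → ℕ), StrictMono φ ∧
      Tendsto (fun k => (Xpw.pair (y (φ k))).2) atTop (𝓝 v) := by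
  obtain ⟨x, φ, hφ, hx⟩ := exists_subseq_tendsto_coordinatewise hyM
  have hdiff : Tendsto (fun a : ℕ × ℕ => nrm2 (y (φ a.1) - y (φ a.2))) atTop (𝓝 0) := by
    refine tendsto_nrm2_nhds_zero_of_coordinatewise (M := M + M) hp hC
      (fun a => Y.sub_mem (hyY _) (hyY _))
      (fun a => (norm_sub_le _ _).trans (add_le_add (hyM _) (hyM _))) fun n => ?_
    rw [← prod_atTop_atTop_eq]
    have := ((hx n).comp tendsto_fst).sub ((hx n).comp tendsto_snd)
    rwa [sub_self] at this
  have hcauchy : CauchySeq fun k => (Xpw.pair (y (φ k))).2 :=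
    cauchySeq_iff_tendsto_dist_atTop_0.mpr (by simpa only [dist_eq_norm] using! hdiff)
  obtain ⟨v, hv⟩ := cauchySeq_tendsto_of_complete hcauchy
  exact ⟨v, φ, hφ, hv⟩

end BoundedRatio

theorem stmt18_general [Fact (1 ≤ ENNReal.ofReal p)] (hp : 2 < p) (hw : IsXpWeight p w)
    (Y : AddSubgroup (Xpw p w)) {C ε α : ℝ} (hC : ∀ y ∈ Y, y ≠ 0 → ratio y ≤ C)
    (hε : ε < 1) (hα : 0 < α) :
    ∃ x : Xpw p w, x ≠ 0 ∧ ratio x < α ∧ ∀ y ∈ Y, ε * ‖x‖ ≤ ‖x - y‖ := by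
  by_contra! hY
  obtain ⟨c, hc, E, y, hE, hyY, hcy⟩ :=
    exists_seq_le_nrm2_restrict (Y := Y) hp hw hε hα fun x hx hxα => by simpa using hY x hx hxα
  obtain ⟨v, φ, hφ, hv⟩ := exists_subseq_tendsto_pair_snd hp
    (fun y hy => nrm2_le_mul_nrmP_of_ratio_le (hC y hy)) (fun k => (hyY k).1)
    (fun k => (nrmP_le_norm _).trans (hyY k).2)
  have hescape (n : ℕ) : ∀ᶠ k in atTop, n ∉ E (φ k) := by
    filter_upwards [eventually_gt_atTop n] with k hk hn
    exact (hk.trans_le (hφ.le_apply)).not_ge (hE _ n hn)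
  have hzero : Tendsto (fun k => nrm2 (restrict (E (φ k)) (y (φ k)))) atTop (𝓝 0) := by
    simpa [nrm2, pair_restrict_snd] using
      (tendsto_lpProj_nhds_zero_of_escape ENNReal.ofNat_ne_top hv hescape).norm
  exact hc.not_ge (ge_of_tendsto' hzero fun k => hcy (φ k))

/-- Proposition 2.8: there do not exist a closed infinite dimensional
subspace `Y` of `X_p` and constants `0 < ε < 1`, `α > 0` such that (a) `r(Y) < ∞` and
(b) every nonzero `x ∈ X_p` with `r(x) < α` admits `y ∈ Y` with `‖x - y‖ < ε ‖x‖`. -/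
theorem stmt18 (p : ℝ) (hp : 2 < p) [Fact (1 ≤ ENNReal.ofReal p)]
    (w : ℕ → ℝ) (hw : IsXpWeight p w) :
    ¬ ∃ (Y : Submodule ℝ (Xpw p w)) (ε α : ℝ),
        IsClosed (Y : Set (Xpw p w)) ∧ ¬ FiniteDimensional ℝ ↥Y ∧
        0 < ε ∧ ε < 1 ∧ 0 < α ∧
        (∃ C : ℝ, ∀ y ∈ Y, y ≠ 0 → ratio y ≤ C) ∧
        (∀ x : Xpw p w, x ≠ 0 → ratio x < α → ∃ y ∈ Y, ‖x - y‖ < ε * ‖x‖) := by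
  rintro ⟨Y, ε, α, -, -, -, hε, hα, ⟨C, hC⟩, hY⟩
  obtain ⟨x, hx, hxα, hxY⟩ := stmt18_general hp hw Y.toAddSubgroup hC hε hα
  obtain ⟨y, hyY, hy⟩ := hY x hx hxα
  exact (hxY y hyY).not_gt hy
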